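/- arXiv:1805.02072 — 3 statements merged into one kernel-verified Lean document; each statement's English description precedes it below -/
import Mathlib

section
/- Let ε = 1/50 (radians). Suppose u, v, w ∈ ℝ² are three non-collinear points such that each of the three angles of the triangle uvw differs from π/3 by less than ε. Let q⁺ be the image of v under the rotation about u by angle π/3 (anti-clockwise) and q⁻ the image of v under the rotation about u by angle −π/3 (clockwise). Then dist(w, q⁺) ≤ 1.2·ε·dist(u, v) or dist(w, q⁻) ≤ 1.2·ε·dist(u, v). -/
open EuclideanGeometry

lemma s17_sq (a b : ℝ) (ha1 : -(1/50) ≤ a) (ha2 : a ≤ 1/50) (hb1 : -(1/50) ≤ b) (hb2 : b ≤ 1/50)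
    (hc1 : -(1/50) ≤ -(a+b)) (hc2 : -(a+b) ≤ 1/50) : a ^ 2 + a * b + b ^ 2 ≤ (1/50)^2 := by
  have h1 := sq_le_sq' ha1 ha2
  have h2 := sq_le_sq' hb1 hb2
  have h3 := sq_le_sq' hc1 hc2
  rcases le_total 0 (a * b) with h | h
  · linarith [show (-(a+b))^2 = a^2 + 2*(a*b) + b^2 by ring]
  rcases le_total (a * (a + b)) 0 with h4 | h4
  · linarith [show a * (a+b) = a^2 + a*b by ring]
  rcases le_total (b * (a + b)) 0 with h5 | h5
  · linarith [show b * (a+b) = b^2 + a*b by ring]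
  have h6 : 0 ≤ (a * b) * (a + b) ^ 2 := by
    have := mul_nonneg h4 h5
    linarith [show a * (a + b) * (b * (a + b)) = (a * b) * (a + b) ^ 2 by ring]
  have h7 : a * b = 0 ∨ (a + b) ^ 2 = 0 := by
    apply mul_eq_zero.1
    exact le_antisymm (mul_nonpos_of_nonpos_of_nonneg h (sq_nonneg _)) h6
  rcases h7 with h7 | h7
  · linarith [show (-(a+b))^2 = a^2 + 2*(a*b) + b^2 by ring]
  · have : a + b = 0 := by simpa using h7
    linarith [show a ^ 2 + a * b = a * (a + b) by ring, show a * (a + b) = 0 by rw [this, mul_zero]]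

lemma s17_real (α β γ r : ℝ) (hs : α + β + γ = Real.pi)
    (ha : |α - Real.pi / 3| < 1 / 50) (hb : |β - Real.pi / 3| < 1 / 50)
    (hc : |γ - Real.pi / 3| < 1 / 50) (hr : r * Real.sin γ = Real.sin β) :
    r ^ 2 + 1 - 2 * r * Real.cos (α - Real.pi / 3) ≤ (1.2 * (1 / 50)) ^ 2 := by
  obtain ⟨a, rfl⟩ : ∃ a, α = a + Real.pi / 3 := ⟨α - Real.pi / 3, by ring⟩
  obtain ⟨b, rfl⟩ : ∃ b, β = b + Real.pi / 3 := ⟨β - Real.pi / 3, by ring⟩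
  obtain rfl : γ = -(a + b) + Real.pi / 3 := by linarith
  simp only [add_sub_cancel_right] at *
  obtain ⟨ha1, ha2⟩ := abs_lt.1 ha
  obtain ⟨hb1, hb2⟩ := abs_lt.1 hb
  obtain ⟨hc1, hc2⟩ := abs_lt.1 hc
  have h3l : (1.732:ℝ) ≤ √3 := Real.le_sqrt_of_sq_le (by norm_num)
  have h3u : √3 ≤ (1.7321:ℝ) := Real.sqrt_le_iff.2 (by norm_num)
  have h33 : √3 * √3 = (3:ℝ) := Real.mul_self_sqrt (by norm_num)
  have sq : ∀ x : ℝ, Real.sin x ^ 2 ≤ x ^ 2 := fun x => sq_le_sq.2 Real.abs_sin_le_abs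
  have hsb : ∀ x : ℝ, |x| < 1 / 50 → |Real.sin x| ≤ 1 / 50 := fun x hx =>
    Real.abs_sin_le_abs.trans hx.le
  have hcb : ∀ x : ℝ, |x| < 1 / 50 → (0.9998:ℝ) ≤ Real.cos x := fun x hx => by
    have := Real.one_sub_sq_div_two_le_cos (x := x)
    have h2 : x ^ 2 ≤ (1/50) ^ 2 := sq_le_sq' (abs_lt.1 hx).1.le (abs_lt.1 hx).2.le
    norm_num at h2 ⊢
    linarith
  -- sin γ lower bound
  have hg : (0.8558:ℝ) ≤ Real.sin (-(a + b) + Real.pi / 3) := by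
    rw [Real.sin_add, Real.cos_pi_div_three, Real.sin_pi_div_three]
    have h1 := hcb _ hc
    have h2 := (abs_le.1 (hsb _ hc)).1
    nlinarith
  have hg0 : 0 < Real.sin (-(a + b) + Real.pi / 3) := by linarith
  have key : (Real.sin (b + Real.pi / 3) - Real.sin (-(a + b) + Real.pi / 3)) ^ 2
      = (2 - Real.cos a + √3 * Real.sin a) * Real.sin (b + a / 2) ^ 2 := by
    rw [Real.sin_sub_sin]
    have e1 : (b + Real.pi / 3 - (-(a + b) + Real.pi / 3)) / 2 = b + a / 2 := by ring
    have e2 : (b + Real.pi / 3 + (-(a + b) + Real.pi / 3)) / 2 = Real.pi / 3 - a / 2 := by ring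
    rw [e1, e2]
    have e3 : 4 * Real.cos (Real.pi / 3 - a / 2) ^ 2 = 2 - Real.cos a + √3 * Real.sin a := by
      have h1 : Real.cos a = 2 * Real.cos (a/2) ^ 2 - 1 := by
        rw [← Real.cos_two_mul]; ring_nf
      have h2 : Real.sin a = 2 * Real.sin (a/2) * Real.cos (a/2) := by
        rw [← Real.sin_two_mul]; ring_nf
      rw [Real.cos_sub, Real.cos_pi_div_three, Real.sin_pi_div_three, h1, h2]
      have h4 := Real.sin_sq_add_cos_sq (a/2)
      linear_combination (Real.sin (a/2))^2 * h33 + 3 * h4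
    rw [← e3]; ring
  have hP : Real.sin (b + Real.pi / 3) * Real.sin (-(a + b) + Real.pi / 3) ≤ 0.76 := by
    have e : 2 * Real.sin (b + Real.pi / 3) * Real.sin (-(a + b) + Real.pi / 3)
        = Real.cos (2 * b + a) + Real.cos (a + Real.pi / 3) := by
      rw [Real.two_mul_sin_mul_sin]
      have : b + Real.pi / 3 + (-(a + b) + Real.pi / 3) = Real.pi - (a + Real.pi / 3) := by ring
      rw [this, Real.cos_pi_sub]
      ring_nf
    have h1 := Real.cos_le_one (2 * b + a)
    have h2 := Real.cos_le_one a
    have h3 := (abs_le.1 (hsb _ ha)).1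
    rw [Real.cos_add a, Real.cos_pi_div_three, Real.sin_pi_div_three] at e
    nlinarith
  have hA : 2 - Real.cos a + √3 * Real.sin a ≤ 1.035 := by
    have h1 := hcb _ ha
    have h3 := (abs_le.1 (hsb _ ha)).2
    nlinarith
  have hsq : a ^ 2 + a * b + b ^ 2 ≤ (1/50)^2 := by
    exact s17_sq a b ha1.le ha2.le hb1.le hb2.le hc1.le hc2.le
  have hcosa := Real.one_sub_sq_div_two_le_cos (x := a)
  have hcosa1 := Real.cos_le_one a
  generalize Real.sin (-(a + b) + Real.pi / 3) = G at *
  generalize Real.sin (b + Real.pi / 3) = B at *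
  generalize Real.cos a = C at *
  subst hr
  have h1 : (r * G - G) ^ 2 ≤ 1.035 * (b + a / 2) ^ 2 := by
    rw [key]
    exact mul_le_mul hA (sq _) (sq_nonneg _) (by norm_num)
  have h2 : 2 * (r * G * G) * (1 - C) ≤ 0.76 * a ^ 2 := by
    have : (r * G * G) * (1 - C) ≤ 0.76 * (a ^ 2 / 2) :=
      mul_le_mul hP (by linarith) (by linarith) (by norm_num)
    linarith
  have h3 : (r ^ 2 + 1 - 2 * r * C) * G ^ 2 ≤ (1.2 * (1 / 50)) ^ 2 * G ^ 2 := by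
    have : (0.8558:ℝ)^2 ≤ G ^ 2 := by gcongr
    norm_num at this ⊢ h1 h2 hsq
    nlinarith [sq_nonneg a]
  exact le_of_mul_le_mul_right h3 (by positivity)

lemma s17_cx (r α θ : ℝ) : ‖(r : ℂ) * Complex.exp (α * Complex.I) - Complex.exp (θ * Complex.I)‖ ^ 2
    = r ^ 2 + 1 - 2 * r * Real.cos (α - θ) := by
  rw [← Complex.normSq_eq_norm_sq, Complex.normSq_apply, Real.cos_sub]
  simp [Complex.exp_ofReal_mul_I_re, Complex.exp_ofReal_mul_I_im]
  linear_combination r ^ 2 * Real.sin_sq_add_cos_sq α + Real.sin_sq_add_cos_sq θ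

theorem stmt_17 (u v w : ℂ) (huvw : ¬ Collinear ℝ ({u, v, w} : Set ℂ))
    (ha : |EuclideanGeometry.angle v u w - Real.pi / 3| < 1 / 50)
    (hb : |EuclideanGeometry.angle u v w - Real.pi / 3| < 1 / 50)
    (hc : |EuclideanGeometry.angle u w v - Real.pi / 3| < 1 / 50) :
    dist w (u + Complex.exp ((Real.pi / 3) * Complex.I) * (v - u)) ≤
        1.2 * (1 / 50) * dist u v ∨
      dist w (u + Complex.exp (-(Real.pi / 3) * Complex.I) * (v - u)) ≤
        1.2 * (1 / 50) * dist u v := by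
  have huv : u ≠ v := by
    rintro rfl; apply huvw; simpa using collinear_pair ℝ u w
  have huw : u ≠ w := by
    rintro rfl; apply huvw
    have : ({u, v, u} : Set ℂ) = {u, v} := by ext; simp; tauto
    rw [this]; exact collinear_pair ℝ u v
  have hd : v - u ≠ 0 := sub_ne_zero.2 huv.symm
  have hd' : w - u ≠ 0 := sub_ne_zero.2 huw.symm
  set z : ℂ := (w - u) / (v - u) with hz
  have hzw : w = u + z * (v - u) := by rw [hz]; field_simp; ring
  have harg : EuclideanGeometry.angle v u w = |z.arg| := by
    rw [EuclideanGeometry.angle_comm]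
    exact Complex.angle_eq_abs_arg hd' hd
  have hsum := EuclideanGeometry.angle_add_angle_add_angle_eq_pi w huv.symm
  have hsin := EuclideanGeometry.law_sin w v u
  have hnz : ‖z‖ = dist u w / dist u v := by
    rw [hz, norm_div, dist_comm u w, dist_comm u v, dist_eq_norm, dist_eq_norm]
  have hduv : 0 < dist u v := dist_pos.2 huv
  have hr : ‖z‖ * Real.sin (EuclideanGeometry.angle u w v) = Real.sin (EuclideanGeometry.angle u v w) := by
    rw [EuclideanGeometry.angle_comm w v u, dist_comm v u] at hsin
    rw [hnz, div_mul_eq_mul_div, div_eq_iff hduv.ne']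
    linarith
  have hmain := s17_real |z.arg| _ _ ‖z‖ (by
    rw [← harg]
    rw [EuclideanGeometry.angle_comm w u v, EuclideanGeometry.angle_comm v w u] at hsum
    linarith) (harg ▸ ha) hb hc hr
  have hfin : ∀ e : ℂ, ‖z - e‖ ^ 2 ≤ (1.2 * (1 / 50)) ^ 2 → 
      dist w (u + e * (v - u)) ≤ 1.2 * (1 / 50) * dist u v := by
    intro e he
    have h1 : ‖z - e‖ ≤ 1.2 * (1 / 50) := le_of_sq_le_sq he (by norm_num)
    have h2 : w - (u + e * (v - u)) = (z - e) * (v - u) := by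
      linear_combination hzw
    rw [dist_eq_norm, h2, norm_mul, dist_comm u v, dist_eq_norm]
    gcongr
  have hpol := Complex.norm_mul_exp_arg_mul_I z
  rcases le_total 0 z.arg with h | h
  · left
    apply hfin
    have := s17_cx ‖z‖ z.arg (Real.pi / 3)
    rw [hpol] at this
    push_cast at this
    rw [this]
    rwa [abs_of_nonneg h] at hmain
  · right
    apply hfin
    have := s17_cx ‖z‖ z.arg (-(Real.pi / 3))
    rw [hpol] at this
    push_cast at this
    rw [this]
    rw [abs_of_nonpos h] at hmain
    have e : Real.cos (z.arg - -(Real.pi / 3)) = Real.cos (-z.arg - Real.pi / 3) := by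
      rw [← Real.cos_neg]; ring_nf
    rwa [e]
end

section
/- Let s ≥ 2 be an integer and let f : ℕ → ℝ be a non-negative sequence with f(n) = 0 for all n < s, f(s) = 1, such that (i) for all n ≥ s, f(n)/C(n, s) ≥ f(n+1)/C(n+1, s), and (ii) for all positive integers a, b, f(a·b) ≥ a·f(b) + f(a)·bˢ. Then there exists a real number γ such that f(n)/C(n, s) converges to γ as n → ∞, and for every natural number n one has γ·(nˢ − n)/s! ≥ f(n) ≥ γ·C(n, s). -/
/-- Recurrence sequences: if `f : ℕ → ℝ` is non-negative, vanishes below `s`,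
`f s = 1`, the density `f n / C(n, s)` is non-increasing for `n ≥ s`, and
`f (a·b) ≥ a·f b + f a·bˢ` for all positive `a, b`, then `f n / C(n, s)`
converges to some `γ` with `γ·(nˢ - n)/s! ≥ f n ≥ γ·C(n, s)` for all `n`. -/
theorem stmt_18 (s : ℕ) (hs : 2 ≤ s) (f : ℕ → ℝ)
    (hnonneg : ∀ n, 0 ≤ f n) (hzero : ∀ n < s, f n = 0) (hone : f s = 1)
    (hmono : ∀ n, s ≤ n →
      f (n + 1) / ((n + 1).choose s : ℝ) ≤ f n / (n.choose s : ℝ))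
    (hsuper : ∀ a b : ℕ, 0 < a → 0 < b →
      (a : ℝ) * f b + f a * (b : ℝ) ^ s ≤ f (a * b)) :
    ∃ γ : ℝ,
      Filter.Tendsto (fun n : ℕ => f n / (n.choose s : ℝ)) Filter.atTop (nhds γ) ∧
      ∀ n : ℕ, f n ≤ γ * (((n : ℝ) ^ s - (n : ℝ)) / (Nat.factorial s : ℝ)) ∧
        γ * (n.choose s : ℝ) ≤ f n := by
  have hanti : Antitone (fun n : ℕ => f (n + s) / ((n + s).choose s : ℝ)) := by
    apply antitone_nat_of_succ_le
    intro n
    have h := hmono (n + s) (by omega)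
    have e : n + 1 + s = n + s + 1 := by omega
    rw [e]
    exact h
  have hbdd : BddBelow (Set.range (fun n : ℕ => f (n + s) / ((n + s).choose s : ℝ))) := by
    refine ⟨0, ?_⟩
    rintro _ ⟨n, rfl⟩
    exact div_nonneg (hnonneg _) (Nat.cast_nonneg _)
  have hlim0 := tendsto_atTop_ciInf hanti hbdd
  have hle := fun n => ciInf_le hbdd n
  generalize (⨅ n : ℕ, f (n + s) / ((n + s).choose s : ℝ)) = γ at hlim0 hle
  have hlim : Filter.Tendsto (fun n : ℕ => f n / (n.choose s : ℝ)) Filter.atTop (nhds γ) :=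
    (Filter.tendsto_add_atTop_iff_nat (f := fun n : ℕ => f n / (n.choose s : ℝ)) s).1 hlim0
  refine ⟨γ, hlim, fun n => ⟨?_, ?_⟩⟩
  · by_cases hn : n < 2
    · rw [hzero n (by omega)]
      have : ((n : ℝ) ^ s - (n : ℝ)) = 0 := by
        interval_cases n
        · simp; omega
        · simp
      simp [this]
    · have hn2 : 2 ≤ n := by omega
      have key : ∀ k : ℕ, f n * (((n : ℝ) ^ k) ^ s - (n : ℝ) ^ k)
          ≤ ((n : ℝ) ^ s - n) * f (n ^ k) := by
        intro k
        have hns : (0 : ℝ) ≤ (n : ℝ) ^ s - n := by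
          have : (n : ℝ) ≤ (n : ℝ) ^ s :=
            le_self_pow₀ (by exact_mod_cast (by omega : 1 ≤ n)) (by omega)
          linarith
        induction k with
        | zero => simp [hzero 1 (by omega)]
        | succ k ih =>
          have h := hsuper n (n ^ k) (by omega) (by positivity)
          have e : n ^ (k + 1) = n * n ^ k := by ring
          rw [e]
          have h2 := mul_le_mul_of_nonneg_left h hns
          have h3 := mul_le_mul_of_nonneg_left ih (Nat.cast_nonneg (α := ℝ) n)
          push_cast at h2
          have e2 : ((n : ℝ) ^ (k + 1)) ^ s = (n : ℝ) ^ s * ((n : ℝ) ^ k) ^ s := by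
            rw [← mul_pow, pow_succ']
          rw [e2, pow_succ']
          linarith
      have htop : Filter.Tendsto (fun k : ℕ => n ^ k) Filter.atTop Filter.atTop :=
        tendsto_pow_atTop_atTop_of_one_lt (by omega)
      have hR := (hlim.comp htop).mul_const (((n : ℝ) ^ s - (n : ℝ)) / (Nat.factorial s : ℝ))
      have hinv : Filter.Tendsto (fun k : ℕ => ((n ^ k : ℕ) : ℝ)⁻¹) Filter.atTop (nhds 0) :=
        (tendsto_inv_atTop_nhds_zero_nat (𝕜 := ℝ)).comp htop
      have hL := (hinv.const_sub 1).const_mul (f n)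
      rw [sub_zero, mul_one] at hL
      refine le_of_tendsto_of_tendsto' hL hR (fun k => ?_)
      simp only [Function.comp]
      have hk := key k
      have hns : (0 : ℝ) ≤ (n : ℝ) ^ s - n := by
        have : (n : ℝ) ≤ (n : ℝ) ^ s :=
          le_self_pow₀ (by exact_mod_cast (by omega : 1 ≤ n)) (by omega)
        linarith
      have hm1 : 1 ≤ n ^ k := Nat.one_le_pow _ _ (by omega)
      have ec : ((n : ℝ) ^ k) = ((n ^ k : ℕ) : ℝ) := by push_cast; rfl
      rw [ec] at hk
      generalize n ^ k = m at hk hm1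
      have hm : (1 : ℝ) ≤ m := by exact_mod_cast hm1
      have hms : (0 : ℝ) < (m : ℝ) ^ s := by positivity
      have hfm : f m ≤ f m / (m.choose s : ℝ) * ((m : ℝ) ^ s / (Nat.factorial s : ℝ)) := by
        by_cases hlt : m < s
        · rw [hzero m hlt]; simp
        · have hc : (0 : ℝ) < (m.choose s : ℝ) := by
            exact_mod_cast Nat.choose_pos (by omega)
          have hcp : (m.choose s : ℝ) ≤ (m : ℝ) ^ s / (Nat.factorial s : ℝ) :=
            Nat.choose_le_pow_div s m
          calc f m = f m / (m.choose s : ℝ) * (m.choose s : ℝ) := by field_simp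
            _ ≤ _ := mul_le_mul_of_nonneg_left hcp (div_nonneg (hnonneg _) hc.le)
      have h1 : (1 - (m : ℝ)⁻¹) * (m : ℝ) ^ s ≤ (m : ℝ) ^ s - m := by
        have : (m : ℝ) ^ 2 ≤ (m : ℝ) ^ s := pow_le_pow_right₀ hm hs
        have h4 : (m : ℝ) ≤ (m : ℝ)⁻¹ * (m : ℝ) ^ s := by
          rw [inv_mul_eq_div, le_div_iff₀ (by linarith)]
          linarith
        linarith
      refine le_of_mul_le_mul_right ?_ hms
      calc f n * (1 - (m : ℝ)⁻¹) * (m : ℝ) ^ s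
          = f n * ((1 - (m : ℝ)⁻¹) * (m : ℝ) ^ s) := by ring
        _ ≤ f n * ((m : ℝ) ^ s - m) := mul_le_mul_of_nonneg_left h1 (hnonneg n)
        _ ≤ ((n : ℝ) ^ s - n) * f m := hk
        _ ≤ ((n : ℝ) ^ s - n) *
            (f m / (m.choose s : ℝ) * ((m : ℝ) ^ s / (Nat.factorial s : ℝ))) :=
          mul_le_mul_of_nonneg_left hfm hns
        _ = _ := by ring
  · by_cases hlt : n < s
    · rw [hzero n hlt, Nat.choose_eq_zero_of_lt hlt]; simp
    · have hc : (0 : ℝ) < (n.choose s : ℝ) := by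
        exact_mod_cast Nat.choose_pos (by omega)
      have h := hle (n - s)
      simp only [Nat.sub_add_cancel (by omega : s ≤ n)] at h
      exact (le_div_iff₀ hc).1 h
end

section
/- Let k ≥ 3 and let A = (a₁, …, a_k) be k distinct points in ℝ², and let δ > 0. Then the limit of H(n, A, δ)/C(n, k) as n → ∞ exists and is at least k!/(k^k − k). -/
open scoped Classical

noncomputable section

abbrev Plane := EuclideanSpace ℝ (Fin 2)

/-- The `k`-element set `B` is δ-similar to the configuration `A = (a₁, …, a_k)`:
`B` can be enumerated as `b₁, …, b_k` so that for some `λ > 0` and all `i ≠ j`,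
`1 - δ ≤ λ·dist(aᵢ, aⱼ)/dist(bᵢ, bⱼ) ≤ 1 + δ`. -/
def DeltaSimilar {k : ℕ} (A : Fin k → Plane) (δ : ℝ) (B : Finset Plane) : Prop :=
  ∃ b : Fin k → Plane, Function.Injective b ∧ (B : Set Plane) = Set.range b ∧
    ∃ l : ℝ, 0 < l ∧ ∀ i j : Fin k, i ≠ j →
      1 - δ ≤ l * dist (A i) (A j) / dist (b i) (b j) ∧
      l * dist (A i) (A j) / dist (b i) (b j) ≤ 1 + δ

/-- `HGeo A δ n` = maximum over `n`-point planar sets `P` of the number of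
`k`-element subsets of `P` that are δ-similar to `A`. -/
noncomputable def HGeo {k : ℕ} (A : Fin k → Plane) (δ : ℝ) (n : ℕ) : ℕ :=
  sSup {m | ∃ P : Finset Plane, P.card = n ∧
    Set.ncard {B : Finset Plane | B ⊆ P ∧ B.card = k ∧ DeltaSimilar A δ B} = m}

def famS {k : ℕ} (A : Fin k → Plane) (δ : ℝ) (P : Finset Plane) : Finset (Finset Plane) :=
  (P.powersetCard k).filter (DeltaSimilar A δ)

theorem mem_famS {k : ℕ} {A : Fin k → Plane} {δ : ℝ} {P B : Finset Plane} :
    B ∈ famS A δ P ↔ B ⊆ P ∧ B.card = k ∧ DeltaSimilar A δ B := by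
  simp [famS, Finset.mem_powersetCard, and_assoc]

theorem ncard_famS {k : ℕ} (A : Fin k → Plane) (δ : ℝ) (P : Finset Plane) :
    Set.ncard {B : Finset Plane | B ⊆ P ∧ B.card = k ∧ DeltaSimilar A δ B}
      = (famS A δ P).card := by
  rw [← Set.ncard_coe_finset]
  congr 1
  ext B
  simp [mem_famS]

theorem famS_card_le {k : ℕ} (A : Fin k → Plane) (δ : ℝ) (P : Finset Plane) :
    (famS A δ P).card ≤ P.card.choose k := by
  rw [← Finset.card_powersetCard]
  exact Finset.card_filter_le _ _

theorem bdd {k : ℕ} (A : Fin k → Plane) (δ : ℝ) (n : ℕ) :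
    BddAbove {m | ∃ P : Finset Plane, P.card = n ∧
      Set.ncard {B : Finset Plane | B ⊆ P ∧ B.card = k ∧ DeltaSimilar A δ B} = m} := by
  refine ⟨n.choose k, ?_⟩
  rintro m ⟨P, rfl, rfl⟩
  rw [ncard_famS]
  exact famS_card_le A δ P

theorem le_H {k : ℕ} (A : Fin k → Plane) (δ : ℝ) (P : Finset Plane) :
    (famS A δ P).card ≤ HGeo A δ P.card :=
  le_csSup (bdd A δ P.card) ⟨P, rfl, ncard_famS A δ P⟩

theorem exists_H {k : ℕ} (A : Fin k → Plane) (δ : ℝ) (n : ℕ) :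
    ∃ P : Finset Plane, P.card = n ∧ (famS A δ P).card = HGeo A δ n := by
  have hne : {m | ∃ P : Finset Plane, P.card = n ∧
      Set.ncard {B : Finset Plane | B ⊆ P ∧ B.card = k ∧ DeltaSimilar A δ B} = m}.Nonempty := by
    obtain ⟨P, hP⟩ := Infinite.exists_subset_card_eq Plane n
    exact ⟨_, P, hP, rfl⟩
  obtain ⟨P, hP, h⟩ := Nat.sSup_mem hne (bdd A δ n)
  exact ⟨P, hP, by rw [← ncard_famS, h]; rfl⟩

theorem H_step {k : ℕ} (A : Fin k → Plane) (δ : ℝ) (n : ℕ) :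
    HGeo A δ (n+1) * (n + 1 - k) ≤ (n+1) * HGeo A δ n := by
  obtain ⟨P, hP, h⟩ := exists_H A δ (n+1)
  rw [← h]
  have key := Finset.sum_card_bipartiteAbove_eq_sum_card_bipartiteBelow
    (s := famS A δ P) (t := P) (fun B p => p ∉ B)
  have h1 : ∀ B ∈ famS A δ P, (Finset.bipartiteAbove (fun B p => p ∉ B) P B).card = n + 1 - k := by
    intro B hB
    rw [mem_famS] at hB
    have : Finset.bipartiteAbove (fun B p => p ∉ B) P B = P \ B := by
      ext x; simp [Finset.bipartiteAbove]
    rw [this, Finset.card_sdiff_of_subset hB.1, hP, hB.2.1]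
  have h2 : ∀ p ∈ P, (Finset.bipartiteBelow (fun B p => p ∉ B) (famS A δ P) p).card
      ≤ HGeo A δ n := by
    intro p hp
    have hc : (P.erase p).card = n := by rw [Finset.card_erase_of_mem hp, hP]; rfl
    rw [← hc]
    refine le_trans (Finset.card_le_card ?_) (le_H A δ (P.erase p))
    intro B hB
    simp only [Finset.bipartiteBelow, Finset.mem_filter, mem_famS] at hB
    rw [mem_famS]
    exact ⟨Finset.subset_erase.2 ⟨hB.1.1, hB.2⟩, hB.1.2⟩
  rw [Finset.sum_congr rfl h1, Finset.sum_const, smul_eq_mul] at key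
  rw [key, ← hP]
  simpa using Finset.sum_le_card_nsmul P _ _ h2

theorem exists_eps {k : ℕ} (A : Fin k → Plane) (hA : Function.Injective A) (δ : ℝ) (hδ : 0 < δ)
    (P : Finset Plane) : ∃ ε : ℝ, 0 < ε ∧ ∀ i j : Fin k, i ≠ j → ∀ p ∈ P, ∀ q ∈ P,
      A i + ε • p ≠ A j + ε • q ∧
      1 - δ ≤ 1 * dist (A i) (A j) / dist (A i + ε • p) (A j + ε • q) ∧
      1 * dist (A i) (A j) / dist (A i + ε • p) (A j + ε • q) ≤ 1 + δ := by
  have : ∀ᶠ ε : ℝ in nhds 0, ∀ i j : Fin k, i ≠ j → ∀ p ∈ P, ∀ q ∈ P,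
      A i + ε • p ≠ A j + ε • q ∧
      1 - δ ≤ 1 * dist (A i) (A j) / dist (A i + ε • p) (A j + ε • q) ∧
      1 * dist (A i) (A j) / dist (A i + ε • p) (A j + ε • q) ≤ 1 + δ := by
    rw [Filter.eventually_all]; intro i
    rw [Filter.eventually_all]; intro j
    by_cases hij : i = j
    · simp [hij]
    simp only [ne_eq, hij, not_false_eq_true, forall_true_left]
    rw [Filter.eventually_all_finset]; intro p _
    rw [Filter.eventually_all_finset]; intro q _
    have hd : 0 < dist (A i) (A j) := dist_pos.2 fun h => hij (hA h)
    have c1 : Filter.Tendsto (fun ε : ℝ => dist (A i + ε • p) (A j + ε • q)) (nhds 0)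
        (nhds (dist (A i) (A j))) := by
      have : Continuous (fun ε : ℝ => dist (A i + ε • p) (A j + ε • q)) := by fun_prop
      simpa using this.tendsto 0
    have c2 : Filter.Tendsto (fun ε : ℝ => 1 * dist (A i) (A j) / dist (A i + ε • p) (A j + ε • q))
        (nhds 0) (nhds 1) := by
      have := (tendsto_const_nhds (x := 1 * dist (A i) (A j))).div c1 hd.ne'
      rw [one_mul, div_self hd.ne'] at this
      simpa [Pi.div_def] using this
    filter_upwards [c1.eventually (lt_mem_nhds hd),
      c2.eventually (lt_mem_nhds (show 1 - δ < 1 by linarith)),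
      c2.eventually (gt_mem_nhds (show 1 < 1 + δ by linarith))] with ε e1 e2 e3
    exact ⟨dist_pos.1 e1, e2.le, e3.le⟩
  have h2 := (this.filter_mono nhdsWithin_le_nhds).and
    (self_mem_nhdsWithin : Set.Ioi (0:ℝ) ∈ nhdsWithin 0 (Set.Ioi 0))
  obtain ⟨ε, h, h0⟩ := h2.exists
  exact ⟨ε, h0, h⟩

theorem H_rec {k : ℕ} (hk : 3 ≤ k) (A : Fin k → Plane) (hA : Function.Injective A) (δ : ℝ)
    (hδ : 0 < δ) (n : ℕ) : n ^ k + k * HGeo A δ n ≤ HGeo A δ (k * n) := by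
  obtain ⟨P, hP, h⟩ := exists_H A δ n
  obtain ⟨ε, h0, hε⟩ := exists_eps A hA δ hδ P
  have hinj : ∀ i, Function.Injective (fun x : Plane => A i + ε • x) := by
    intro i x y hxy
    exact smul_right_injective _ h0.ne' (add_left_cancel hxy)
  have sep : ∀ i j, ∀ p ∈ P, ∀ q ∈ P, A i + ε • p = A j + ε • q → i = j := by
    intro i j p hp q hq he
    by_contra hij
    exact (hε i j hij p hp q hq).1 he
  set Q : Finset Plane := Finset.univ.biUnion (fun i : Fin k => P.image (fun x => A i + ε • x))
    with hQ
  have hQm : ∀ i, ∀ p ∈ P, A i + ε • p ∈ Q := fun i p hp => by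
    rw [hQ, Finset.mem_biUnion]
    exact ⟨i, Finset.mem_univ _, Finset.mem_image_of_mem _ hp⟩
  have hQc : Q.card = k * n := by
    rw [hQ, Finset.card_biUnion]
    · simp [Finset.card_image_of_injective _ (hinj _), hP]
    · intro i _ j _ hij
      rw [Function.onFun, Finset.disjoint_left]
      intro x hx hy
      obtain ⟨p, hp, rfl⟩ := Finset.mem_image.1 hx
      obtain ⟨q, hq, he⟩ := Finset.mem_image.1 hy
      exact hij (sep j i q hq p hp he).symm
  set T1 : Finset (Finset Plane) := (Fintype.piFinset (fun _ : Fin k => P)).image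
    (fun g => Finset.univ.image (fun i => A i + ε • g i)) with hT1
  set T2 : Finset (Finset Plane) := Finset.univ.biUnion (fun i : Fin k =>
    (famS A δ P).image (fun B => B.image (fun x => A i + ε • x))) with hT2
  have c1 : T1.card = n ^ k := by
    rw [hT1, Finset.card_image_of_injOn]
    · simp [hP]
    · intro g hg g' hg' he
      simp only [Finset.mem_coe, Fintype.mem_piFinset] at hg hg'
      funext i
      have : A i + ε • g i ∈ Finset.univ.image (fun i => A i + ε • g' i) := by
        have he' : Finset.univ.image (fun i => A i + ε • g i)
          = Finset.univ.image (fun i => A i + ε • g' i) := he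
        rw [← he']
        exact Finset.mem_image_of_mem (fun i => A i + ε • g i) (Finset.mem_univ i)
      obtain ⟨j, _, hj⟩ := Finset.mem_image.1 this
      obtain rfl := sep _ _ _ (hg' j) _ (hg i) hj
      exact (hinj j hj).symm
  have c2 : T2.card = k * HGeo A δ n := by
    rw [hT2, Finset.card_biUnion]
    · simp [Finset.card_image_of_injective _ (Finset.image_injective (hinj _)), h]
    · intro i _ j _ hij
      rw [Function.onFun, Finset.disjoint_left]
      intro X hx hy
      obtain ⟨B, hB, rfl⟩ := Finset.mem_image.1 hx
      obtain ⟨B', hB', he⟩ := Finset.mem_image.1 hy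
      rw [mem_famS] at hB hB'
      have hne : B.Nonempty := by
        rw [← Finset.card_pos]; omega
      obtain ⟨x, hx⟩ := hne
      have : A i + ε • x ∈ B'.image (fun x => A j + ε • x) := by
        rw [he]
        exact Finset.mem_image_of_mem (fun x => A i + ε • x) hx
      obtain ⟨y, hy, hxy⟩ := Finset.mem_image.1 this
      exact hij (sep _ _ _ (hB'.1 hy) _ (hB.1 hx) hxy).symm
  have d : Disjoint T1 T2 := by
    rw [Finset.disjoint_left]
    intro X hx hy
    obtain ⟨g, hg, rfl⟩ := Finset.mem_image.1 hx
    obtain ⟨i, _, hi⟩ := Finset.mem_biUnion.1 hy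
    obtain ⟨B, hB, he⟩ := Finset.mem_image.1 hi
    rw [mem_famS] at hB
    rw [Fintype.mem_piFinset] at hg
    have : Nontrivial (Fin k) := Fin.nontrivial_iff_two_le.2 (by omega)
    obtain ⟨j, hj⟩ := exists_ne i
    have : A j + ε • g j ∈ B.image (fun x => A i + ε • x) := by
      rw [he]
      exact Finset.mem_image_of_mem (fun i => A i + ε • g i) (Finset.mem_univ j)
    obtain ⟨y, hy, hxy⟩ := Finset.mem_image.1 this
    exact hj (sep _ _ _ (hB.1 hy) _ (hg j) hxy).symm
  rw [← c1, ← c2, ← Finset.card_union_of_disjoint d, ← hQc]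
  refine le_trans (Finset.card_le_card ?_) (le_H A δ Q)
  intro X hX
  rw [mem_famS]
  rcases Finset.mem_union.1 hX with hX | hX
  · obtain ⟨g, hg, rfl⟩ := Finset.mem_image.1 hX
    rw [Fintype.mem_piFinset] at hg
    have gi : Function.Injective (fun i => A i + ε • g i) := fun i j hij =>
      sep _ _ _ (hg i) _ (hg j) hij
    refine ⟨?_, ?_, fun i => A i + ε • g i, gi, ?_, 1, one_pos, ?_⟩
    · intro x hx
      obtain ⟨i, _, rfl⟩ := Finset.mem_image.1 hx
      exact hQm i _ (hg i)
    · rw [Finset.card_image_of_injective _ gi]; simp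
    · simp
    · intro i j hij
      exact (hε i j hij _ (hg i) _ (hg j)).2
  · obtain ⟨i, _, hi⟩ := Finset.mem_biUnion.1 hX
    obtain ⟨B, hB, rfl⟩ := Finset.mem_image.1 hi
    rw [mem_famS] at hB
    obtain ⟨hBP, hBc, b, hb, hBb, l, hl, hd⟩ := hB
    refine ⟨?_, ?_, fun j => A i + ε • b j, fun x y hxy => hb (hinj i hxy), ?_, ε * l,
      mul_pos h0 hl, ?_⟩
    · intro x hx
      obtain ⟨p, hp, rfl⟩ := Finset.mem_image.1 hx
      exact hQm i _ (hBP hp)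
    · rw [Finset.card_image_of_injective _ (hinj i), hBc]
    · rw [Finset.coe_image, hBb, ← Set.range_comp]; rfl
    · intro u v huv
      have := hd u v huv
      rw [dist_add_left, dist_smul₀, Real.norm_of_nonneg h0.le, mul_assoc,
        mul_div_mul_left _ _ h0.ne']
      exact this

theorem choose_lim (k : ℕ) : Filter.Tendsto (fun n : ℕ => (n.choose k : ℝ) / (n:ℝ) ^ k)
    Filter.atTop (nhds (1 / (Nat.factorial k : ℝ))) := by
  have hf : (Nat.factorial k : ℝ) ≠ 0 := by exact_mod_cast Nat.factorial_ne_zero k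
  have h := (isEquivalent_choose k).div (Asymptotics.IsEquivalent.refl (u := fun n : ℕ => (n:ℝ)^k))
  have h2 : Filter.Tendsto ((fun n : ℕ => (n:ℝ)^k / (Nat.factorial k : ℝ)) / fun n : ℕ => (n:ℝ)^k)
      Filter.atTop (nhds (1 / (Nat.factorial k : ℝ))) := by
    refine tendsto_const_nhds.congr' ?_
    filter_upwards [Filter.eventually_gt_atTop 0] with n hn
    have n0 : (n:ℝ) ≠ 0 := by exact_mod_cast hn.ne'
    simp only [Pi.div_apply]
    field_simp
  exact h.symm.tendsto_nhds h2

/-- For any configuration `A` of `k ≥ 3` distinct planar points and any `δ > 0`,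
`H(n, A, δ)/C(n, k)` converges as `n → ∞` to a limit that is at least
`k!/(k^k - k)`. -/
theorem stmt_19 (k : ℕ) (hk : 3 ≤ k) (A : Fin k → Plane)
    (hA : Function.Injective A) (δ : ℝ) (hδ : 0 < δ) :
    ∃ L : ℝ, (Nat.factorial k : ℝ) / ((k : ℝ) ^ k - (k : ℝ)) ≤ L ∧
      Filter.Tendsto (fun n : ℕ => (HGeo A δ n : ℝ) / (n.choose k : ℝ))
        Filter.atTop (nhds L) := by
  have hanti : Antitone (fun n : ℕ => (HGeo A δ (n+k) : ℝ) / ((n+k).choose k : ℝ)) := by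
    apply antitone_nat_of_succ_le
    intro n
    have p1 : (0:ℝ) < ((n+k).choose k : ℝ) := by
      exact_mod_cast Nat.choose_pos (by omega)
    have p2 : (0:ℝ) < ((n+1+k).choose k : ℝ) := by
      exact_mod_cast Nat.choose_pos (by omega)
    have s := H_step A δ (n+k)
    have e : n + k + 1 - k = n + 1 := by omega
    have e2 : n + 1 + k = n + k + 1 := by omega
    have ch := Nat.choose_mul_succ_eq (n+k) k
    rw [e] at s ch
    rw [e2] at p2 ⊢
    rw [div_le_div_iff₀ p2 p1]
    have s' : (HGeo A δ (n+k+1) : ℝ) * (n+1) ≤ (n+k+1) * HGeo A δ (n+k) := by exact_mod_cast s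
    have ch' : ((n+k).choose k : ℝ) * (n+k+1) = ((n+k+1).choose k : ℝ) * (n+1) := by
      exact_mod_cast ch
    have hn : (0:ℝ) < n + 1 := by positivity
    refine le_of_mul_le_mul_right ?_ hn
    nlinarith [mul_le_mul_of_nonneg_right s' p1.le]
  have hb : BddBelow (Set.range (fun n : ℕ => (HGeo A δ (n+k) : ℝ) / ((n+k).choose k : ℝ))) := by
    refine ⟨0, ?_⟩
    rintro _ ⟨n, rfl⟩
    positivity
  obtain ⟨L, hL'⟩ : ∃ L, Filter.Tendsto
      (fun n : ℕ => (HGeo A δ (n+k) : ℝ) / ((n+k).choose k : ℝ)) Filter.atTop (nhds L) :=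
    ⟨_, tendsto_atTop_ciInf hanti hb⟩
  have hL : Filter.Tendsto (fun n : ℕ => (HGeo A δ n : ℝ) / (n.choose k : ℝ))
        Filter.atTop (nhds L) :=
    (Filter.tendsto_add_atTop_iff_nat (f := fun n : ℕ => (HGeo A δ n : ℝ) / (n.choose k : ℝ)) k).1
      hL'
  refine ⟨L, ?_, hL⟩
  have hkn : Filter.Tendsto (fun n : ℕ => k * n) Filter.atTop Filter.atTop :=
    Filter.tendsto_id.const_mul_atTop' (by omega)
  have l1 := ((hL.comp hkn).mul ((choose_lim k).comp hkn)).mul_const ((k:ℝ)^k)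
  have l2 := ((hL.mul (choose_lim k)).const_mul (k:ℝ)).const_add 1
  have hle : 1 + (k:ℝ) * (L * (1 / (Nat.factorial k : ℝ))) ≤
      L * (1 / (Nat.factorial k : ℝ)) * (k:ℝ)^k := by
    refine le_of_tendsto_of_tendsto l2 l1 ?_
    filter_upwards [Filter.eventually_ge_atTop k] with n hn
    have r : (n:ℝ) ^ k + k * HGeo A δ n ≤ HGeo A δ (k * n) := by
      exact_mod_cast H_rec hk A hA δ hδ n
    have n0 : (0:ℝ) < n := by
      exact_mod_cast (show 0 < n by omega)
    have k0 : (0:ℝ) < k := by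
      exact_mod_cast (show 0 < k by omega)
    have p1 : (n.choose k : ℝ) ≠ 0 := by
      exact_mod_cast (Nat.choose_pos hn).ne'
    have p2 : ((k*n).choose k : ℝ) ≠ 0 := by
      exact_mod_cast (Nat.choose_pos (by nlinarith)).ne'
    simp only [Function.comp]
    have e1 : 1 + (k:ℝ) * ((HGeo A δ n : ℝ) / (n.choose k : ℝ) * ((n.choose k : ℝ) / (n:ℝ) ^ k))
        = ((n:ℝ) ^ k + k * HGeo A δ n) / (n:ℝ)^k := by
      field_simp
    have e2 : (HGeo A δ (k*n) : ℝ) / ((k*n).choose k : ℝ) *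
        (((k*n).choose k : ℝ) / ((k*n : ℕ):ℝ) ^ k) * (k:ℝ)^k = HGeo A δ (k*n) / (n:ℝ)^k := by
      push_cast
      rw [mul_pow]
      field_simp
    rw [e1, e2]
    gcongr
  have hf : (0:ℝ) < Nat.factorial k := by exact_mod_cast Nat.factorial_pos k
  have hk1 : (1:ℝ) < k := by exact_mod_cast (show 1 < k by omega)
  have hpos : (0:ℝ) < (k:ℝ)^k - k := by
    have := pow_lt_pow_right₀ hk1 (show 1 < k by omega)
    rw [pow_one] at this
    linarith
  rw [div_le_iff₀ hpos]
  have := mul_le_mul_of_nonneg_right hle hf.le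
  have e1 : (1 + (k:ℝ) * (L * (1 / (Nat.factorial k : ℝ)))) * Nat.factorial k
    = Nat.factorial k + k * L := by field_simp
  have e2 : L * (1 / (Nat.factorial k : ℝ)) * (k:ℝ)^k * Nat.factorial k = L * (k:ℝ)^k := by
    field_simp
  rw [e1, e2] at this
  linarith

end
end
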